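/- Let N ≥ 1 and consider the affinity dynamics of a single task over N agents with a greedy (max-affinity) assignment sequence σ. Then for every cycle k ≥ N − 1, the map i ↦ a k i is a bijection from the set of agents Fin N onto the integer interval {1, …, N}. -/

import Mathlib

/-- Affinity dynamics of a single task over `N` agents with assignment
sequence `σ`: initially all affinities are 1; the assigned agent's affinity
is reset to 1, every other agent's affinity is incremented. -/
def affinity {N : ℕ} (σ : ℕ → Fin N) : ℕ → Fin N → ℕ
  | 0, _ => 1
  | k + 1, i => if σ k = i then 1 else affinity σ k i + 1

/-- Affinity pressure of the task at cycle `k`. -/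
def AP {N : ℕ} (σ : ℕ → Fin N) (k : ℕ) : ℚ :=
  (∑ i : Fin N, (affinity σ k i : ℚ)) / N - (N + 1) / 2

/-- `σ` is greedy (max-affinity): at every cycle the assigned agent has
maximal affinity. -/
def Greedy {N : ℕ} (σ : ℕ → Fin N) : Prop :=
  ∀ k i, affinity σ k i ≤ affinity σ k (σ k)


theorem aff_pos {N : ℕ} (σ : ℕ → Fin N) (k : ℕ) (i : Fin N) : 1 ≤ affinity σ k i := by
  cases k with
  | zero => simp [affinity]
  | succ k => simp only [affinity]; split_ifs <;> omega

theorem aff_le {N : ℕ} (σ : ℕ → Fin N) (k : ℕ) (i : Fin N) : affinity σ k i ≤ k + 1 := by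
  induction k with
  | zero => simp [affinity]
  | succ k ih => simp only [affinity]; split_ifs <;> omega

theorem aff_inj {N : ℕ} (σ : ℕ → Fin N) (k : ℕ) (i j : Fin N) (hij : i ≠ j)
    (h : affinity σ k i = affinity σ k j) : affinity σ k i = k + 1 := by
  induction k with
  | zero => simp [affinity]
  | succ k ih =>
    have h1 := aff_pos σ k i
    have h2 := aff_pos σ k j
    simp only [affinity] at h ⊢
    split_ifs at h ⊢ with h3 h4 h4
    · exact absurd (h3.symm.trans h4) hij
    · omega
    · omega
    · have := ih (by omega)
      omega

theorem aff_surj {N : ℕ} (hN : 1 ≤ N) (σ : ℕ → Fin N) (hσ : Greedy σ) (k : ℕ) :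
    ∀ v, 1 ≤ v → v ≤ k + 1 → v ≤ N → ∃ i, affinity σ k i = v := by
  induction k with
  | zero =>
    intro v h1 h2 _
    exact ⟨⟨0, hN⟩, by simp only [affinity]; omega⟩
  | succ k ih =>
    intro v h1 h2 h3
    by_cases hv : v = 1
    · exact ⟨σ k, by simp [affinity, hv]⟩
    obtain ⟨w, rfl⟩ : ∃ w, v = w + 1 := ⟨v - 1, by omega⟩
    obtain ⟨i, hi⟩ := ih w (by omega) (by omega) (by omega)
    by_contra hcon
    have key : ∀ j, affinity σ k j = w → σ k = j := by
      intro j hj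
      by_contra hne
      exact hcon ⟨j, by simp [affinity, hne, hj]⟩
    have hmax : ∀ j, affinity σ k j ≤ w := by
      intro j
      have := hσ k j
      rw [key i hi, hi] at this
      exact this
    have hinj : Function.Injective (affinity σ k) := by
      intro p q hpq
      by_contra hne
      have h4 := aff_inj σ k p q hne hpq
      have h5 := hmax p
      exact hne ((key p (by omega)).symm.trans (key q (by omega)))
    have := Finset.card_le_card_of_injOn (s := Finset.univ) (t := Finset.Icc 1 w)
      (affinity σ k) (fun j _ => by simpa using ⟨aff_pos σ k j, hmax j⟩) hinj.injOn
    simp at this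
    omega

theorem greedy_affinity_bijOn {N : ℕ} (hN : 1 ≤ N) (σ : ℕ → Fin N)
    (hσ : Greedy σ) : ∀ k, N - 1 ≤ k →
    Set.BijOn (fun i => affinity σ k i) Set.univ (Set.Icc 1 N) := by
  intro k hk
  have hsub : Finset.Icc 1 N ⊆ Finset.univ.image (affinity σ k) := by
    intro v hv
    rw [Finset.mem_Icc] at hv
    obtain ⟨i, hi⟩ := aff_surj hN σ hσ k v hv.1 (by omega) hv.2
    exact Finset.mem_image.2 ⟨i, Finset.mem_univ _, hi⟩
  have hle : (Finset.univ.image (affinity σ k)).card ≤ N := by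
    simpa using Finset.card_image_le (s := Finset.univ) (f := affinity σ k)
  have heq := Finset.eq_of_subset_of_card_le hsub (by simpa using hle)
  have hinj : Set.InjOn (affinity σ k) (Finset.univ : Finset (Fin N)) := by
    apply Finset.card_image_iff.1
    rw [← heq]; simp
  refine ⟨?_, by simpa using hinj, ?_⟩
  · intro i _
    have : affinity σ k i ∈ Finset.Icc 1 N := by
      rw [heq]; exact Finset.mem_image_of_mem _ (Finset.mem_univ _)
    simpa using this
  · intro v hv
    obtain ⟨i, hi⟩ := aff_surj hN σ hσ k v hv.1 (by have := hv.2; omega) hv.2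
    exact ⟨i, trivial, hi⟩
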